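/- Fix a real number α > −1, set σ = √(1+α), and let φ ∈ (0,π) be such that z := σ·cot(φ) − α/2 ≠ 0. Then −4·G(α,φ)·∂E₁(α,φ)/∂φ = ψ(α,z), where ψ(α,z) = −z{4z³ − (4+3α)(4+α)z − α(2+α)²}/(16((z+α/2)²+1+α)³). (This expresses that along the Liouville–Green map, for which dφ/dξ = −2G(α,φ), the first coefficient E₁ satisfies 2·dE₁/dξ = ψ.) -/

import Mathlib

/-- `ψ(α,z) = −z{4z³ − (4+3α)(4+α)z − α(2+α)²}/(16((z+α/2)²+1+α)³)`. -/
noncomputable def psiLG (α z : ℝ) : ℝ :=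
  -z * (4 * z ^ 3 - (4 + 3 * α) * (4 + α) * z - α * (2 + α) ^ 2) /
    (16 * ((z + α / 2) ^ 2 + 1 + α) ^ 3)

/-!
In terms of `s = sin φ` and `z = σ cot φ - α / 2`, each factor is a power of `s` times a polynomial
in `z`. First, `G = s³ z / (2σ²)`. Next, `∂E₁/∂φ` becomes a homogeneous cubic in `(sin φ, cos φ)`
after multiplying its linear terms by `sin² φ + cos² φ = 1`, and this cubic is `s³ / (32σ⁴)` times
the cubic factor of `ψ`. Finally, `(z + α / 2)² + 1 + α = σ² (cot² φ + 1) = σ² / s²`, so both sides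
equal `-s⁶ / (16σ⁶)` times `z` times that cubic factor.
-/

open Real

/-- The coefficient `E₁(α, φ)`. Here and below `σ` is a separate argument, constrained by
`σ ^ 2 = 1 + α` in the lemmas that need it. -/
noncomputable def lgE₁ (α σ φ : ℝ) : ℝ :=
  sin φ * (5 * cos φ ^ 2 - 2) / (24 * σ)
    + α * (cos φ * (5 * cos φ ^ 2 - 6) + 1) / (48 * (1 + α))

/-- The function `G(α, φ)`, which gives the Liouville–Green map through `dφ/dξ = -2G`. -/
noncomputable def lgG (α σ φ : ℝ) : ℝ :=
  cos φ * sin φ ^ 2 / (2 * σ) - α * sin φ ^ 3 / (4 * (1 + α))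

/-- The variable `z` of `ψ(α, z)` as a function of the angle: `z = σ cot φ - α / 2`. -/
noncomputable def lgZ (α σ φ : ℝ) : ℝ :=
  σ * (cos φ / sin φ) - α / 2

section Derivative

variable (φ : ℝ)

theorem hasDerivAt_sin_mul_five_cos_sq_sub_two :
    HasDerivAt (fun t => sin t * (5 * cos t ^ 2 - 2))
      (3 * (cos φ * (cos φ ^ 2 - 4 * sin φ ^ 2))) φ := by
  refine ((hasDerivAt_sin φ).fun_mul
    ((((hasDerivAt_cos φ).fun_pow 2).const_mul 5).sub_const 2)).congr_deriv ?_
  push_cast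
  linear_combination 2 * cos φ * sin_sq_add_cos_sq φ

theorem hasDerivAt_cos_mul_five_cos_sq_sub_six :
    HasDerivAt (fun t => cos t * (5 * cos t ^ 2 - 6))
      (3 * (sin φ * (2 * sin φ ^ 2 - 3 * cos φ ^ 2))) φ := by
  refine ((hasDerivAt_cos φ).fun_mul
    ((((hasDerivAt_cos φ).fun_pow 2).const_mul 5).sub_const 6)).congr_deriv ?_
  push_cast
  linear_combination -6 * sin φ * sin_sq_add_cos_sq φ

theorem hasDerivAt_lgE₁ (α σ : ℝ) :
    HasDerivAt (lgE₁ α σ)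
      (cos φ * (cos φ ^ 2 - 4 * sin φ ^ 2) / (8 * σ)
        + α * (sin φ * (2 * sin φ ^ 2 - 3 * cos φ ^ 2)) / (16 * (1 + α))) φ := by
  refine (((hasDerivAt_sin_mul_five_cos_sq_sub_two φ).div_const (24 * σ)).fun_add
    ((((hasDerivAt_cos_mul_five_cos_sq_sub_six φ).add_const 1).const_mul α).div_const
      (48 * (1 + α)))).congr_deriv ?_
  -- `1 + α` may be zero, and `ring` would distribute `48 * (1 + α)` inside the inverse.
  generalize 1 + α = β
  ring

end Derivative

section CotangentVariable

variable {α σ φ : ℝ}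

theorem lgZ_add_half_sq_add (hσ : σ ^ 2 = 1 + α) (hφ : sin φ ≠ 0) :
    (lgZ α σ φ + α / 2) ^ 2 + 1 + α = σ ^ 2 / sin φ ^ 2 :=
  calc (lgZ α σ φ + α / 2) ^ 2 + 1 + α = σ ^ 2 * ((cos φ / sin φ) ^ 2 + 1) := by
        rw [lgZ]
        linear_combination -hσ
    _ = σ ^ 2 * ((sin φ ^ 2 + cos φ ^ 2) / sin φ ^ 2) := by
        field_simp
        ring
    _ = σ ^ 2 / sin φ ^ 2 := by
        rw [sin_sq_add_cos_sq, mul_one_div]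

theorem lgG_eq_sin_pow_mul_lgZ (hσ : σ ^ 2 = 1 + α) (hσ₀ : σ ≠ 0) (hφ : sin φ ≠ 0) :
    lgG α σ φ = sin φ ^ 3 * lgZ α σ φ / (2 * σ ^ 2) := by
  rw [lgG, lgZ, ← hσ]
  field_simp
  ring

theorem deriv_lgE₁_eq_sin_pow_mul_cubic (hσ : σ ^ 2 = 1 + α) (hσ₀ : σ ≠ 0) (hφ : sin φ ≠ 0) :
    deriv (lgE₁ α σ) φ =
      sin φ ^ 3 * (4 * lgZ α σ φ ^ 3 - (4 + 3 * α) * (4 + α) * lgZ α σ φ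
        - α * (2 + α) ^ 2) / (32 * σ ^ 4) := by
  obtain rfl : α = σ ^ 2 - 1 := by linear_combination -hσ
  rw [(hasDerivAt_lgE₁ φ _ σ).deriv, lgZ, ← hσ]
  field_simp
  ring

theorem E1_schwarzian_general (hσ : σ ^ 2 = 1 + α) (hσ₀ : σ ≠ 0) (hφ : sin φ ≠ 0) :
    -4 * lgG α σ φ * deriv (lgE₁ α σ) φ = psiLG α (lgZ α σ φ) := by
  rw [psiLG, lgZ_add_half_sq_add hσ hφ, lgG_eq_sin_pow_mul_lgZ hσ hσ₀ hφ,
    deriv_lgE₁_eq_sin_pow_mul_cubic hσ hσ₀ hφ]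
  field_simp
  ring

end CotangentVariable

/-- For `α > −1`, `σ = √(1+α)`, `φ ∈ (0,π)` with `z = σ·cot(φ) − α/2 ≠ 0`:
`−4·G(α,φ)·∂E₁(α,φ)/∂φ = ψ(α,z)`; i.e. along the Liouville–Green map
(`dφ/dξ = −2G`), `2·dE₁/dξ = ψ`. -/
theorem E1_schwarzian (α : ℝ) (hα : (-1 : ℝ) < α) (φ : ℝ) (hφ0 : 0 < φ)
    (hφπ : φ < Real.pi) (z : ℝ)
    (hzdef : z = Real.sqrt (1 + α) * (Real.cos φ / Real.sin φ) - α / 2) (hz : z ≠ 0) :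
    -4 * (Real.cos φ * Real.sin φ ^ 2 / (2 * Real.sqrt (1 + α))
        - α * Real.sin φ ^ 3 / (4 * (1 + α))) *
      deriv (fun t => Real.sin t * (5 * Real.cos t ^ 2 - 2) / (24 * Real.sqrt (1 + α))
        + α * (Real.cos t * (5 * Real.cos t ^ 2 - 6) + 1) / (48 * (1 + α))) φ
    = psiLG α z := by
  subst hzdef
  exact E1_schwarzian_general (sq_sqrt (by linarith)) (sqrt_ne_zero'.mpr (by linarith))
    (sin_pos_of_pos_of_lt_pi hφ0 hφπ).ne'
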